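/- Let ε > 0, T > 0 and 0 < ρ̲ ≤ ρ̄ be real numbers. Let u : [0,T] × ℝ³ → ℝ³ be continuous and ℤ³-periodic in the space variable, with all spatial partial derivatives up to order two existing and continuous on [0,T] × ℝ³. Let ρ : [0,T] × ℝ³ → ℝ be ℤ³-periodic in the space variable, continuously differentiable in t and twice continuously differentiable in x, and suppose it satisfies the viscous continuity equation ∂ₜρ(t,x) + div(ρ(t,x) u(t,x)) = ε Δρ(t,x) for all (t,x) ∈ (0,T) × ℝ³, together with ρ̲ ≤ ρ(0,x) ≤ ρ̄ for all x ∈ ℝ³. Then for every (t,x) ∈ [0,T] × ℝ³ one has ρ̲ · exp( − ∫₀ᵗ sup_{y∈ℝ³} |div u(s,y)| ds ) ≤ ρ(t,x) ≤ ρ̄ · exp( ∫₀ᵗ sup_{y∈ℝ³} |div u(s,y)| ds ). -/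

import Mathlib

/-!
The proof is the classical parabolic maximum principle, run on the torus so that suprema are attained.

Let `m s = sup_y |div u(s,y)|`, which is continuous on `[0,T]`, and `F t = ∫₀ᵗ m`. Suppose a solution
`v` of the equation satisfies `v(0,·) ≤ C`, and let `G` be a primitive of `n` with `G 0 = 0`. For
`δ > 0`, the function `v e^{-G} - δ t` attains its maximum over `[0,t] × ℝ³`, by periodicity. At a
maximum point with positive time, `∇v = 0`, `Δv ≤ 0` and the time derivative is nonnegative; the
equation then gives `0 < -v (div u + n)`. Hence, if `-v div u ≤ n v` at all points where
`v > C e^G`, the maximum is at most `C`; letting `δ → 0` gives `v ≤ C e^G`. This is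
`le_mul_exp_of_reaction_bound`. It is used three times:

* `v = ρ`, `G = F`, `C = ρ̄` gives the upper bound;
* `v = -ρ`, `G = F`, `C = 0` gives `ρ ≥ 0`;
* `v = -ρ`, `G = -F`, `C = -ρ̲` gives the lower bound; here `ρ ≥ 0` supplies the sign condition.
-/

open MeasureTheory Set Filter BigOperators

/-- The `i`-th spatial partial derivative of a scalar field on `ℝ³`. -/
noncomputable def pd (i : Fin 3) (g : (Fin 3 → ℝ) → ℝ) (x : Fin 3 → ℝ) : ℝ :=
  fderiv ℝ g x (Pi.single i 1)

/-- Divergence of a vector field on `ℝ³`. -/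
noncomputable def divg (v : (Fin 3 → ℝ) → (Fin 3 → ℝ)) (x : Fin 3 → ℝ) : ℝ :=
  ∑ i, pd i (fun y => v y i) x

/-- Laplacian of a scalar field on `ℝ³`. -/
noncomputable def lap (g : (Fin 3 → ℝ) → ℝ) (x : Fin 3 → ℝ) : ℝ :=
  ∑ i, pd i (pd i g) x

/-- `ℤ³`-periodicity: the model for functions on the torus `𝕋³`. -/
def PeriodicSpace {α : Type*} (f : (Fin 3 → ℝ) → α) : Prop :=
  ∀ (x : Fin 3 → ℝ) (z : Fin 3 → ℤ), f (x + fun i => (z i : ℝ)) = f x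

/-- A velocity field on `[0,T] × ℝ³`: continuous, `ℤ³`-periodic in space, with all
spatial partial derivatives up to order two existing and continuous on `[0,T] × ℝ³`. -/
structure RegVel (T : ℝ) (u : ℝ → (Fin 3 → ℝ) → (Fin 3 → ℝ)) : Prop where
  periodic : ∀ t ∈ Set.Icc (0:ℝ) T, PeriodicSpace (u t)
  smoothSpace : ∀ t ∈ Set.Icc (0:ℝ) T, ContDiff ℝ 2 (u t)
  cont0 : ContinuousOn (fun p : ℝ × (Fin 3 → ℝ) => u p.1 p.2) (Set.Icc 0 T ×ˢ Set.univ)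
  cont1 : ∀ i j, ContinuousOn (fun p : ℝ × (Fin 3 → ℝ) => pd i (fun y => u p.1 y j) p.2)
      (Set.Icc 0 T ×ˢ Set.univ)
  cont2 : ∀ i j k, ContinuousOn
      (fun p : ℝ × (Fin 3 → ℝ) => pd i (pd j (fun y => u p.1 y k)) p.2)
      (Set.Icc 0 T ×ˢ Set.univ)

/-- A density on `[0,T] × ℝ³`: `ℤ³`-periodic in space, continuously differentiable in `t`,
twice continuously differentiable in `x`, all derivatives continuous on `[0,T] × ℝ³`. -/
structure RegDens (T : ℝ) (ρ : ℝ → (Fin 3 → ℝ) → ℝ) : Prop where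
  periodic : ∀ t ∈ Set.Icc (0:ℝ) T, PeriodicSpace (ρ t)
  smoothSpace : ∀ t ∈ Set.Icc (0:ℝ) T, ContDiff ℝ 2 (ρ t)
  diffTime : ∀ x, ∀ t ∈ Set.Icc (0:ℝ) T, DifferentiableAt ℝ (fun s => ρ s x) t
  cont0 : ContinuousOn (fun p : ℝ × (Fin 3 → ℝ) => ρ p.1 p.2) (Set.Icc 0 T ×ˢ Set.univ)
  contT : ContinuousOn (fun p : ℝ × (Fin 3 → ℝ) => deriv (fun s => ρ s p.2) p.1)
      (Set.Icc 0 T ×ˢ Set.univ)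
  cont1 : ∀ i, ContinuousOn (fun p : ℝ × (Fin 3 → ℝ) => pd i (ρ p.1) p.2)
      (Set.Icc 0 T ×ˢ Set.univ)
  cont2 : ∀ i j, ContinuousOn (fun p : ℝ × (Fin 3 → ℝ) => pd i (pd j (ρ p.1)) p.2)
      (Set.Icc 0 T ×ˢ Set.univ)

/-- The viscous continuity equation `∂ₜρ + div(ρu) = ε Δρ`, pointwise on `(0,T) × ℝ³`. -/
def SolvesViscousContinuity (ε T : ℝ) (ρ : ℝ → (Fin 3 → ℝ) → ℝ)
    (u : ℝ → (Fin 3 → ℝ) → (Fin 3 → ℝ)) : Prop :=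
  ∀ t ∈ Set.Ioo (0:ℝ) T, ∀ x : Fin 3 → ℝ,
    deriv (fun s => ρ s x) t + divg (fun y => ρ t y • u t y) x = ε * lap (ρ t) x

/-! ### Periodicity -/

/-- The fundamental domain, closed so as to be compact. -/
def unitCube : Set (Fin 3 → ℝ) := Set.Icc 0 1

lemma isCompact_unitCube : IsCompact unitCube := isCompact_Icc

lemma exists_mem_unitCube {α : Type*} {f : (Fin 3 → ℝ) → α} (hf : PeriodicSpace f)
    (x : Fin 3 → ℝ) : ∃ y ∈ unitCube, f y = f x := by
  refine ⟨fun i => Int.fract (x i),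
    ⟨fun i => Int.fract_nonneg _, fun i => (Int.fract_lt_one _).le⟩, ?_⟩
  rw [← hf _ (fun i => ⌊x i⌋)]
  congr 1
  funext i
  exact Int.fract_add_floor (x i)

lemma PeriodicSpace.pd {g : (Fin 3 → ℝ) → ℝ} (hg : PeriodicSpace g) (i : Fin 3) :
    PeriodicSpace (pd i g) := by
  intro x z
  unfold _root_.pd
  rw [← fderiv_comp_add_right]
  congr 2
  funext y
  exact hg y z

lemma PeriodicSpace.divg {v : (Fin 3 → ℝ) → (Fin 3 → ℝ)} (hv : PeriodicSpace v) :
    PeriodicSpace (divg v) := by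
  intro x z
  refine Finset.sum_congr rfl fun i _ => ?_
  exact PeriodicSpace.pd (g := fun y => v y i) (fun x z => congrFun (hv x z) i) i x z

/-! ### Derivatives at a maximum point -/

/-- Necessary second-order condition: otherwise the second-derivative test makes the point a local
minimum as well, so `g` is locally constant and its second derivative vanishes. -/
lemma deriv_deriv_nonpos_of_isLocalMax {g : ℝ → ℝ} {a : ℝ} (hg : ContinuousAt g a)
    (h : IsLocalMax g a) : deriv (deriv g) a ≤ 0 := by
  by_contra! hpos
  have hmin := isLocalMin_of_deriv_deriv_pos hpos h.deriv_eq_zero hg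
  have hc : g =ᶠ[nhds a] fun _ => g a := by
    filter_upwards [h, hmin] with y h1 h2 using le_antisymm h1 h2
  have := hc.deriv.deriv_eq
  simp at this
  linarith

lemma hasDerivAt_line {g : (Fin 3 → ℝ) → ℝ} (hg : Differentiable ℝ g) (i : Fin 3)
    (x : Fin 3 → ℝ) (h : ℝ) :
    HasDerivAt (fun s : ℝ => g (x + s • Pi.single i (1 : ℝ))) (pd i g (x + h • Pi.single i 1)) h := by
  have h1 : HasDerivAt (fun s : ℝ => x + s • (Pi.single i (1 : ℝ) : Fin 3 → ℝ))
      (Pi.single i (1 : ℝ)) h := by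
    simpa using ((hasDerivAt_id h).smul_const (Pi.single i (1 : ℝ) : Fin 3 → ℝ)).const_add x
  exact (hg _).hasFDerivAt.comp_hasDerivAt h h1

lemma differentiable_pd {g : (Fin 3 → ℝ) → ℝ} (hg : ContDiff ℝ 2 g) (i : Fin 3) :
    Differentiable ℝ (pd i g) := by
  have h1 : ContDiff ℝ 1 (fderiv ℝ g) := hg.fderiv_right (by norm_num)
  exact (h1.differentiable (by norm_num)).clm_apply (differentiable_const _)

lemma lap_nonpos_of_max {g : (Fin 3 → ℝ) → ℝ} (hg : ContDiff ℝ 2 g) {x : Fin 3 → ℝ}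
    (hx : ∀ y, g y ≤ g x) : lap g x ≤ 0 := by
  refine Finset.sum_nonpos fun i _ => ?_
  have hd : Differentiable ℝ g := hg.differentiable (by norm_num)
  have h1 : deriv (fun s : ℝ => g (x + s • Pi.single i (1 : ℝ)))
      = fun s : ℝ => pd i g (x + s • Pi.single i (1 : ℝ)) :=
    funext fun s => (hasDerivAt_line hd i x s).deriv
  have h2 := (hasDerivAt_line (differentiable_pd hg i) i x 0).deriv
  have h3 := deriv_deriv_nonpos_of_isLocalMax (hasDerivAt_line hd i x 0).continuousAt
    (Filter.Eventually.of_forall fun s => by simpa using hx _)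
  rw [h1, h2] at h3
  simpa using h3

lemma pd_eq_zero_of_max {g : (Fin 3 → ℝ) → ℝ} {x : Fin 3 → ℝ}
    (hx : ∀ y, g y ≤ g x) (i : Fin 3) : pd i g x = 0 := by
  have : IsLocalMax g x := Filter.Eventually.of_forall hx
  simp [pd, this.fderiv_eq_zero]

/-- At a maximum over `[0,t]`, right endpoint included, a left difference quotient is nonnegative. -/
lemma deriv_nonneg_of_left_max {f : ℝ → ℝ} {d t : ℝ} (ht : 0 < t) (hf : HasDerivAt f d t)
    (h : ∀ s ∈ Set.Icc 0 t, f s ≤ f t) : 0 ≤ d := by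
  refine ge_of_tendsto (hasDerivAt_iff_tendsto_slope_left_right.1 hf).1 ?_
  filter_upwards [Ioo_mem_nhdsLT ht] with s hs
  rw [slope_def_field]
  exact div_nonneg_of_nonpos (by linarith [h s ⟨hs.1.le, hs.2.le⟩]) (by linarith [hs.2])

/-! ### The maximum principle -/

lemma divg_smul {g : (Fin 3 → ℝ) → ℝ} {v : (Fin 3 → ℝ) → (Fin 3 → ℝ)} {x : Fin 3 → ℝ}
    (hg : DifferentiableAt ℝ g x) (hv : DifferentiableAt ℝ v x) :
    divg (fun y => g y • v y) x = g x * divg v x + ∑ i, v x i * pd i g x := by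
  unfold divg pd
  rw [Finset.mul_sum, ← Finset.sum_add_distrib]
  refine Finset.sum_congr rfl fun i _ => ?_
  have hvi : DifferentiableAt ℝ (fun y => v y i) x := differentiableAt_pi.1 hv i
  have : (fun y => (g y • v y) i) = fun y => g y * v y i := by
    funext y
    simp
  rw [this, fderiv_fun_mul hg hvi]
  simp

/-- Comparison on `[0,T)`: at a point of positive time where the penalized function
`v e^{-G} - δ t` is maximal, the spatial terms of the equation have a sign, so the reaction bound
contradicts the nonnegativity of the time derivative. -/
lemma le_mul_exp_of_reaction_bound_aux {ε T C : ℝ} (hε : 0 < ε)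
    {u : ℝ → (Fin 3 → ℝ) → (Fin 3 → ℝ)} {v : ℝ → (Fin 3 → ℝ) → ℝ}
    (hu : RegVel T u) (hv : RegDens T v) (hpde : SolvesViscousContinuity ε T v u)
    {G n : ℝ → ℝ} (hG : ∀ t, HasDerivAt G (n t) t) (hG0 : G 0 = 0)
    (h0 : ∀ x, v 0 x ≤ C)
    (hreact : ∀ t ∈ Set.Ioo 0 T, ∀ x, C * Real.exp (G t) < v t x →
      -(v t x * divg (u t) x) ≤ n t * v t x) :
    ∀ t ∈ Set.Ico 0 T, ∀ x, v t x ≤ C * Real.exp (G t) := by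
  intro t ht x
  have hGc : Continuous G := continuous_iff_continuousAt.2 fun s => (hG s).continuousAt
  suffices hmain : ∀ δ > 0, v t x * Real.exp (-G t) ≤ C + δ * t by
    have hle : v t x * Real.exp (-G t) ≤ C := by
      refine le_of_forall_pos_le_add fun η hη => ?_
      have h1 : 0 < t + 1 := by linarith [ht.1]
      have := hmain (η / (t + 1)) (by positivity)
      have h2 : η / (t + 1) * t ≤ η := by
        rw [div_mul_eq_mul_div, div_le_iff₀ h1]
        nlinarith
      linarith
    have := mul_le_mul_of_nonneg_right hle (Real.exp_pos (G t)).le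
    rwa [mul_assoc, ← Real.exp_add, neg_add_cancel, Real.exp_zero, mul_one] at this
  intro δ hδ
  have hsub : Set.Icc 0 t ⊆ Set.Icc 0 T := Set.Icc_subset_Icc_right ht.2.le
  have hcont : ContinuousOn (fun p : ℝ × (Fin 3 → ℝ) => v p.1 p.2 * Real.exp (-G p.1) - δ * p.1)
      (Set.Icc 0 t ×ˢ unitCube) := by
    refine ((hv.cont0.mono (Set.prod_mono hsub (Set.subset_univ _))).mul ?_).sub ?_
    · exact Continuous.continuousOn (by fun_prop)
    · exact Continuous.continuousOn (by fun_prop)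
  obtain ⟨⟨t₀, x₀⟩, ⟨ht₀, hx₀⟩, hmax⟩ := (isCompact_Icc.prod isCompact_unitCube).exists_isMaxOn
    ⟨((0 : ℝ), (0 : Fin 3 → ℝ)), ⟨le_rfl, ht.1⟩, ⟨le_rfl, zero_le_one⟩⟩ hcont
  -- Periodicity turns the maximum over the cube into a maximum over all of `ℝ³`.
  have hglob : ∀ s ∈ Set.Icc 0 t, ∀ y, v s y * Real.exp (-G s) - δ * s
      ≤ v t₀ x₀ * Real.exp (-G t₀) - δ * t₀ := by
    intro s hs y
    obtain ⟨y', hy', hyy⟩ := exists_mem_unitCube (hv.periodic s (hsub hs)) y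
    rw [← hyy]
    exact hmax (a := (s, y')) ⟨hs, hy'⟩
  simp only at ht₀
  suffices hC : v t₀ x₀ * Real.exp (-G t₀) - δ * t₀ ≤ C by
    linarith [hglob t ⟨ht.1, le_rfl⟩ x]
  rcases ht₀.1.eq_or_lt with h | hpos
  · subst h
    simpa [hG0] using h0 x₀
  by_contra! hcon
  have ht₀T : t₀ ∈ Set.Ioo 0 T := ⟨hpos, ht₀.2.trans_lt ht.2⟩
  have hE : 0 < Real.exp (-G t₀) := Real.exp_pos _
  have hxmax : ∀ y, v t₀ y ≤ v t₀ x₀ := fun y =>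
    le_of_mul_le_mul_right (by linarith [hglob t₀ ht₀ y]) hE
  have hbig : C * Real.exp (G t₀) < v t₀ x₀ := by
    have h1 : C < v t₀ x₀ * Real.exp (-G t₀) := by nlinarith
    have h2 := mul_lt_mul_of_pos_right h1 (Real.exp_pos (G t₀))
    rwa [mul_assoc (v t₀ x₀), ← Real.exp_add, neg_add_cancel, Real.exp_zero, mul_one] at h2
  have hr := hreact t₀ ht₀T x₀ hbig
  have hsm := hv.smoothSpace t₀ (hsub ht₀)
  have hlap := lap_nonpos_of_max hsm hxmax
  have heq := hpde t₀ ht₀T x₀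
  rw [divg_smul (hsm.differentiable (by norm_num) _)
    ((hu.smoothSpace t₀ (hsub ht₀)).differentiable (by norm_num) _)] at heq
  simp only [pd_eq_zero_of_max hxmax, mul_zero, Finset.sum_const_zero, add_zero] at heq
  have hd : HasDerivAt (fun s => v s x₀ * Real.exp (-G s) - δ * s)
      (deriv (fun s => v s x₀) t₀ * Real.exp (-G t₀)
        + v t₀ x₀ * (Real.exp (-G t₀) * (-n t₀)) - δ * 1) t₀ :=
    ((hv.diffTime x₀ t₀ (hsub ht₀)).hasDerivAt.mul (hG t₀).neg.exp).sub
      ((hasDerivAt_id t₀).const_mul δ)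
  have hnn := deriv_nonneg_of_left_max hpos hd
    fun s hs => hglob s ⟨hs.1, hs.2.trans ht₀.2⟩ x₀
  have hle : deriv (fun s => v s x₀) t₀ - n t₀ * v t₀ x₀ ≤ 0 := by
    have := mul_nonpos_of_nonneg_of_nonpos hε.le hlap
    linarith
  have := mul_nonpos_of_nonpos_of_nonneg hle hE.le
  linarith

/-- The comparison holds up to the final time by continuity. -/
lemma le_mul_exp_of_reaction_bound {ε T C : ℝ} (hε : 0 < ε) (hT : 0 < T)
    {u : ℝ → (Fin 3 → ℝ) → (Fin 3 → ℝ)} {v : ℝ → (Fin 3 → ℝ) → ℝ}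
    (hu : RegVel T u) (hv : RegDens T v) (hpde : SolvesViscousContinuity ε T v u)
    {G n : ℝ → ℝ} (hG : ∀ t, HasDerivAt G (n t) t) (hG0 : G 0 = 0)
    (h0 : ∀ x, v 0 x ≤ C)
    (hreact : ∀ t ∈ Set.Ioo 0 T, ∀ x, C * Real.exp (G t) < v t x →
      -(v t x * divg (u t) x) ≤ n t * v t x) :
    ∀ t ∈ Set.Icc 0 T, ∀ x, v t x ≤ C * Real.exp (G t) := by
  intro t ht x
  have haux := le_mul_exp_of_reaction_bound_aux hε hu hv hpde hG hG0 h0 hreact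
  rcases ht.2.lt_or_eq with hlt | rfl
  · exact haux t ⟨ht.1, hlt⟩ x
  have h1 : Filter.Tendsto (fun s => v s x) (nhdsWithin t (Set.Iio t)) (nhds (v t x)) :=
    (hv.diffTime x t ht).continuousAt.tendsto.mono_left nhdsWithin_le_nhds
  have h2 : Filter.Tendsto (fun s => C * Real.exp (G s)) (nhdsWithin t (Set.Iio t))
      (nhds (C * Real.exp (G t))) :=
    ((hG t).continuousAt.rexp.const_mul C).tendsto.mono_left nhdsWithin_le_nhds
  refine le_of_tendsto_of_tendsto h1 h2 ?_
  filter_upwards [Ioo_mem_nhdsLT hT] with s hs using haux s ⟨hs.1.le, hs.2⟩ x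

/-! ### Linearity of the equation -/

lemma pd_neg (i : Fin 3) (g : (Fin 3 → ℝ) → ℝ) :
    pd i (fun y => -g y) = fun y => -pd i g y := by
  funext x
  simp [pd, fderiv_fun_neg]

lemma RegDens.neg {T : ℝ} {ρ : ℝ → (Fin 3 → ℝ) → ℝ} (h : RegDens T ρ) :
    RegDens T (fun t x => -ρ t x) where
  periodic t ht x z := congrArg Neg.neg (h.periodic t ht x z)
  smoothSpace t ht := (h.smoothSpace t ht).neg
  diffTime x t ht := (h.diffTime x t ht).fun_neg
  cont0 := h.cont0.neg
  contT := by simpa only [deriv.fun_neg] using! h.contT.neg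
  cont1 i := by simpa only [pd_neg] using! (h.cont1 i).neg
  cont2 i j := by simpa only [pd_neg] using! (h.cont2 i j).neg

lemma SolvesViscousContinuity.neg {ε T : ℝ} {ρ : ℝ → (Fin 3 → ℝ) → ℝ}
    {u : ℝ → (Fin 3 → ℝ) → (Fin 3 → ℝ)} (h : SolvesViscousContinuity ε T ρ u) :
    SolvesViscousContinuity ε T (fun t x => -ρ t x) u := by
  intro t ht x
  have h1 := h t ht x
  have h2 : divg (fun y => -ρ t y • u t y) x = -divg (fun y => ρ t y • u t y) x := by
    simp only [divg, neg_smul, Pi.neg_apply, pd_neg, Finset.sum_neg_distrib]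
  have h3 : lap (fun y => -ρ t y) x = -lap (ρ t) x := by
    simp only [lap, pd_neg, Finset.sum_neg_distrib]
  rw [h2, h3, deriv.fun_neg]
  linarith

/-! ### The supremum of the divergence -/

/-- The supremum of `|div u|` is continuous in time: by periodicity it is a supremum over a compact
set. Freezing the time outside `[0,T]` gives a continuous extension to `ℝ`. -/
lemma exists_continuous_sup_divg {T : ℝ} (hT : 0 < T) {u : ℝ → (Fin 3 → ℝ) → (Fin 3 → ℝ)}
    (hu : RegVel T u) : ∃ m : ℝ → ℝ, Continuous m ∧
      (∀ s ∈ Set.Icc 0 T, m s = ⨆ y, |divg (u s) y|) ∧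
      ∀ s ∈ Set.Icc 0 T, ∀ y, |divg (u s) y| ≤ m s := by
  have hdiv : ContinuousOn (fun p : ℝ × (Fin 3 → ℝ) => |divg (u p.1) p.2|)
      (Set.Icc 0 T ×ˢ Set.univ) :=
    (continuousOn_finsetSum _ fun i _ => hu.cont1 i i).abs
  let f : ℝ → (Fin 3 → ℝ) → ℝ := fun s y => |divg (u (Set.projIcc 0 T hT.le s)) y|
  have hf : Continuous ↿f := by
    refine hdiv.comp_continuous
      (f := fun p : ℝ × (Fin 3 → ℝ) => ((Set.projIcc 0 T hT.le p.1 : ℝ), p.2)) ?_ ?_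
    · exact (continuous_subtype_val.comp (continuous_projIcc.comp continuous_fst)).prodMk
        continuous_snd
    · exact fun p => ⟨Subtype.prop _, trivial⟩
  have himage : ∀ s ∈ Set.Icc 0 T, f s '' unitCube = Set.range fun y => |divg (u s) y| := by
    intro s hs
    have hfs : f s = fun y => |divg (u s) y| := by
      funext y
      simp only [f, Set.projIcc_of_mem hT.le hs]
    rw [hfs]
    refine (Set.image_subset_range _ _).antisymm ?_
    rintro _ ⟨y, rfl⟩
    obtain ⟨y', hy', h⟩ := exists_mem_unitCube (hu.periodic s hs).divg y
    exact ⟨y', hy', by simp only [h]⟩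
  refine ⟨fun s => sSup (f s '' unitCube), isCompact_unitCube.continuous_sSup hf, ?_, ?_⟩
  · intro s hs
    simp only [himage s hs, iSup]
  · intro s hs y
    have hbdd : BddAbove (f s '' unitCube) :=
      (isCompact_unitCube.image (hf.comp (Continuous.prodMk_right s))).bddAbove
    refine le_csSup hbdd ?_
    rw [himage s hs]
    exact ⟨y, rfl⟩

/-- Maximum principle for the viscous continuity equation on the torus:
`ρ̲ exp(−∫₀ᵗ ‖div u(s)‖_∞ ds) ≤ ρ(t,x) ≤ ρ̄ exp(∫₀ᵗ ‖div u(s)‖_∞ ds)`. -/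
theorem maximum_principle_viscous_continuity
    (ε T ρl ρh : ℝ) (hε : 0 < ε) (hT : 0 < T) (hρl : 0 < ρl) (hρlh : ρl ≤ ρh)
    (u : ℝ → (Fin 3 → ℝ) → (Fin 3 → ℝ)) (ρ : ℝ → (Fin 3 → ℝ) → ℝ)
    (hu : RegVel T u) (hρ : RegDens T ρ)
    (hpde : SolvesViscousContinuity ε T ρ u)
    (h0 : ∀ x : Fin 3 → ℝ, ρl ≤ ρ 0 x ∧ ρ 0 x ≤ ρh) :
    ∀ t ∈ Set.Icc (0:ℝ) T, ∀ x : Fin 3 → ℝ,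
      ρl * Real.exp (-(∫ s in (0:ℝ)..t, ⨆ y : Fin 3 → ℝ, |divg (u s) y|)) ≤ ρ t x ∧
      ρ t x ≤ ρh * Real.exp (∫ s in (0:ℝ)..t, ⨆ y : Fin 3 → ℝ, |divg (u s) y|) := by
  obtain ⟨m, hmc, hm, hbound⟩ := exists_continuous_sup_divg hT hu
  set F : ℝ → ℝ := fun t => ∫ s in (0:ℝ)..t, m s with hF
  have hFd : ∀ t, HasDerivAt F (m t) t := fun t => (hmc.integral_hasStrictDerivAt 0 t).hasDerivAt
  have hF0 : F 0 = 0 := by simp [hF]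
  have hint : ∀ t ∈ Set.Icc (0:ℝ) T, (∫ s in (0:ℝ)..t, ⨆ y : Fin 3 → ℝ, |divg (u s) y|) = F t := by
    intro t ht
    refine intervalIntegral.integral_congr fun s hs => ?_
    rw [Set.uIcc_of_le ht.1] at hs
    exact (hm s ⟨hs.1, hs.2.trans ht.2⟩).symm
  have hub := le_mul_exp_of_reaction_bound hε hT hu hρ hpde hFd hF0 (fun x => (h0 x).2) (by
    intro t ht x hx
    have hpos : 0 < ρ t x :=
      (mul_pos (hρl.trans_le hρlh) (Real.exp_pos _)).trans hx
    nlinarith [neg_abs_le (divg (u t) x), hbound t (Set.Ioo_subset_Icc_self ht) x])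
  have hnn : ∀ t ∈ Set.Icc 0 T, ∀ x, -ρ t x ≤ 0 * Real.exp (F t) :=
    le_mul_exp_of_reaction_bound hε hT hu hρ.neg hpde.neg hFd hF0
      (fun x => by linarith [(h0 x).1]) (by
    intro t ht x hx
    rw [zero_mul] at hx
    nlinarith [neg_abs_le (divg (u t) x), hbound t (Set.Ioo_subset_Icc_self ht) x])
  have hlb : ∀ t ∈ Set.Icc 0 T, ∀ x, -ρ t x ≤ -ρl * Real.exp (-F t) :=
    le_mul_exp_of_reaction_bound (G := fun t => -F t) (n := fun t => -m t) hε hT hu hρ.neg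
      hpde.neg (fun t => (hFd t).neg) (by simp [hF0])
      (fun x => by linarith [(h0 x).1]) (by
    intro t ht x _
    have hρ0 := hnn t (Set.Ioo_subset_Icc_self ht) x
    rw [zero_mul] at hρ0
    nlinarith [le_abs_self (divg (u t) x), hbound t (Set.Ioo_subset_Icc_self ht) x])
  intro t ht x
  rw [hint t ht]
  exact ⟨by linarith [hlb t ht x], hub t ht x⟩
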